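/- arXiv:1807.10450 — 3 statements merged into one kernel-verified Lean document; each statement's English description precedes it below -/
import Mathlib

section
/- Let m be a positive square-free integer. There exists a positive real constant C (depending only on m) such that for all integers n ≥ m, C·(n/m)^(φ(m)/m − 1) ≤ ρ(n,m) ≤ (n/m)^(φ(m)/m − 1). -/
/-- `rho n m` is the proportion of permutations in `Sym(n)` whose order is coprime to `m`. -/
noncomputable def rho (n m : ℕ) : ℝ :=
  (Finset.univ.filter (fun π : Equiv.Perm (Fin n) => Nat.Coprime (orderOf π) m)).card /
    (Nat.factorial n : ℝ)

/-!
Sort the pairs `(π, x)`, with `π` of order coprime to `m`, by the length `d` of the cycle of `π`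
through `x`. There are `n (n - 1) ⋯ (n - d + 1)` cycles of length `d` with a marked point, and `π`
acts on the remaining `n - d` points by an arbitrary permutation of order coprime to `m`, so
`n ρ(n) = ∑ ρ(n - d)` over the `d ≤ n` coprime to `m`. Coprimality to `m` is `m`-periodic, so the
terms with `d > m` sum to `(n - m) ρ(n - m)`, which leaves a recurrence
`n ρ(n) = (n - m) ρ(n - m) + ∑_{d ∈ S} ρ(n - d)` with `S ⊆ [1, m]` of size `φ(m)`.

This recurrence is monotone in the earlier values, so `ρ` is squeezed between super- and
subsolutions. Step functions `V(⌊n / m⌋)` with `V` nonincreasing reduce the requirement on these to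
one inequality between consecutive values of `V`; for `V(k) = (k + 1) ^ (δ - 1)` and
`V(k) = c k ^ (δ - 1)`, where `δ = φ(m) / m`, it is weighted AM-GM.
-/

open Equiv Function Finset

section Permutations

variable {γ α : Type*}

theorem minimalPeriod_apply_of_semiconj {f : γ → γ} {g : α → α} {e : γ → α}
    (he : Injective e) (h : Semiconj e f g) (x : γ) :
    minimalPeriod g (e x) = minimalPeriod f x := by
  refine minimalPeriod_eq_minimalPeriod_iff.2 fun n => ?_
  rw [IsPeriodicPt, IsFixedPt, ← h.iterate_right n x, he.eq_iff]
  rfl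

theorem orderOf_addLeft {G : Type*} [AddGroup G] (a : G) :
    orderOf (Equiv.addLeft a) = addOrderOf a := by
  rw [← orderOf_ofAdd_eq_addOrderOf, orderOf_eq_orderOf_iff]
  intro n
  rw [Equiv.nsmul_addLeft, ← ofAdd_nsmul, ofAdd_eq_one, Equiv.ext_iff]
  simp

theorem semiconj_addLeft_one_iterate (f : α → α) (x : α) {d : ℕ} [NeZero d]
    (hx : minimalPeriod f x = d) :
    Semiconj (fun i : ZMod d => f^[i.val] x) (Equiv.addLeft (1 : ZMod d)) f := fun i => by
  have hval : (1 + i : ZMod d).val = (i.val + 1) % minimalPeriod f x := by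
    rw [hx, add_comm, ZMod.val_add, ZMod.val_one_eq_one_mod, Nat.add_mod_mod]
  simp only [Equiv.coe_addLeft, hval, iterate_mod_minimalPeriod_eq, iterate_succ_apply']

theorem iterate_val_of_semiconj_addLeft_one {f : α → α} {d : ℕ} [NeZero d]
    {e : ZMod d → α} (h : Semiconj e (Equiv.addLeft (1 : ZMod d)) f) (i : ZMod d) :
    f^[i.val] (e 0) = e i := by
  rw [← h.iterate_right, Equiv.coe_addLeft, add_left_iterate]
  simp

/-- Points of exact period `d` of `f`, as parametrized cycles: injective maps `ZMod d → α` carrying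
`i ↦ 1 + i` to `f`. The point is the image of `0`. -/
noncomputable def periodicEmbeddingEquiv (f : α → α) (d : ℕ) [NeZero d] :
    {e : ZMod d ↪ α // Semiconj e (Equiv.addLeft (1 : ZMod d)) f} ≃
      {x : α // minimalPeriod f x = d} where
  toFun e := ⟨e.1 0,
    (minimalPeriod_apply_of_semiconj e.1.injective e.2 0).trans (ZMod.addOrderOf_one d)⟩
  invFun x := ⟨⟨fun i => f^[i.val] x, fun i j hij => ZMod.val_injective d <|
    iterate_injOn_Iio_minimalPeriod (x.2.symm ▸ i.val_lt) (x.2.symm ▸ j.val_lt) hij⟩,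
    semiconj_addLeft_one_iterate f x x.2⟩
  left_inv e := Subtype.ext <| DFunLike.ext _ _ <| iterate_val_of_semiconj_addLeft_one e.2
  right_inv x := Subtype.ext <| by
    change f^[(0 : ZMod d).val] x = x
    rw [ZMod.val_zero, iterate_zero_apply]

theorem disjoint_viaEmbedding {e : γ ↪ α} (c : Perm γ) {τ : Perm α}
    (hτ : ∀ i, τ (e i) = e i) :
    (c.viaEmbedding e).Disjoint τ := fun a => by
  by_cases ha : a ∈ Set.range e
  · obtain ⟨i, rfl⟩ := ha
    exact .inr (hτ i)
  · exact .inl (c.viaEmbedding_apply_of_notMem e a ha)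

open Classical in
/-- The permutations of `α` that restrict to `c` on the copy `e` of `γ` correspond to the
permutations of the complement of that copy. -/
noncomputable def semiconjPermEquiv (e : γ ↪ α) (c : Perm γ) :
    Perm {a // a ∉ Set.range e} ≃ {π : Perm α // Semiconj e c π} :=
  (Perm.subtypeEquivSubtypePerm (· ∉ Set.range e)).trans <|
    (Equiv.mulLeft (c.viaEmbedding e)).subtypeEquiv fun τ => by
      simp [Semiconj, ← Perm.viaEmbedding_apply, eq_comm]

theorem orderOf_semiconjPermEquiv [Finite α] (e : γ ↪ α) (c : Perm γ)
    (σ : Perm {a // a ∉ Set.range e}) :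
    orderOf (semiconjPermEquiv e c σ : Perm α) = (orderOf c).lcm (orderOf σ) := by
  classical
  cases nonempty_fintype α
  have hdisj : (c.viaEmbedding e).Disjoint (Perm.ofSubtype σ) :=
    disjoint_viaEmbedding c fun i =>
      Perm.ofSubtype_apply_of_not_mem σ (not_not.2 (Set.mem_range_self i))
  calc orderOf (semiconjPermEquiv e c σ : Perm α)
      = orderOf (c.viaEmbedding e * Perm.ofSubtype σ) := rfl
    _ = (orderOf c).lcm (orderOf σ) := by
        rw [hdisj.orderOf, ← Perm.viaEmbeddingHom_apply,
          orderOf_injective _ (Perm.viaEmbeddingHom_injective e),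
          orderOf_injective _ Perm.ofSubtype_injective]

/-- The permutations of `α` whose order is coprime to `m`. -/
abbrev CoprimePerm (m : ℕ) (α : Type*) := {π : Perm α // (orderOf π).Coprime m}

theorem card_coprimePerm_congr {β : Type*} (m : ℕ) (s : α ≃ β) :
    Nat.card (CoprimePerm m α) = Nat.card (CoprimePerm m β) :=
  Nat.card_congr <| s.permCongr.subtypeEquiv fun π => by
    rw [show orderOf (s.permCongr π) = orderOf π from s.permCongrHom.orderOf_eq π]

theorem coprime_lcm_left_iff {a b m : ℕ} : (a.lcm b).Coprime m ↔ a.Coprime m ∧ b.Coprime m :=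
  ⟨fun h => ⟨h.of_dvd_left (Nat.dvd_lcm_left a b), h.of_dvd_left (Nat.dvd_lcm_right a b)⟩,
    fun h => (h.1.mul_left h.2).of_dvd_left (Nat.lcm_dvd_mul a b)⟩

theorem card_coprimePerm_semiconj [Finite α] (m : ℕ) (e : γ ↪ α) (c : Perm γ) :
    Nat.card {π : CoprimePerm m α // Semiconj e c π.1} =
      if (orderOf c).Coprime m then Nat.card (CoprimePerm m {a // a ∉ Set.range e}) else 0 := by
  have hcard : Nat.card {π : CoprimePerm m α // Semiconj e c π.1} =
      Nat.card {σ : Perm {a // a ∉ Set.range e} //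
        (orderOf c).Coprime m ∧ (orderOf σ).Coprime m} :=
    Nat.card_congr <| (subtypeSubtypeEquivSubtypeInter _ _).trans <|
      (subtypeEquivRight fun _ => and_comm).trans <|
      (subtypeSubtypeEquivSubtypeInter _ _).symm.trans <| .symm <|
      (semiconjPermEquiv e c).subtypeEquiv fun σ => by
        rw [orderOf_semiconjPermEquiv, coprime_lcm_left_iff]
  rw [hcard]
  split_ifs with hc
  · exact Nat.card_congr (subtypeEquivRight fun _ => and_iff_right hc)
  · simp only [hc, false_and, Nat.card_of_isEmpty]

theorem card_coprimePerm_semiconj_fin {n m d : ℕ} [NeZero d] (e : ZMod d ↪ Fin n) :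
    Nat.card {π : CoprimePerm m (Fin n) // Semiconj e (Equiv.addLeft (1 : ZMod d)) π.1} =
      if d.Coprime m then Nat.card (CoprimePerm m (Fin (n - d))) else 0 := by
  have hcompl : Nat.card {a // a ∉ Set.range e} = n - d := by
    have hrange : (Set.range e).ncard = d := by
      rw [← Nat.card_coe_set_eq, Nat.card_range_of_injective e.injective, Nat.card_zmod]
    have := Set.ncard_compl (Set.range e)
    rw [hrange, Nat.card_fin] at this
    exact this
  rw [card_coprimePerm_semiconj, orderOf_addLeft, ZMod.addOrderOf_one,
    card_coprimePerm_congr m (Finite.equivFinOfCardEq hcompl)]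

theorem card_coprimePerm_minimalPeriod (n m d : ℕ) [NeZero d] :
    Nat.card {q : CoprimePerm m (Fin n) × Fin n // minimalPeriod q.1.1 q.2 = d} =
      n.descFactorial d * if d.Coprime m then Nat.card (CoprimePerm m (Fin (n - d))) else 0 :=
  calc Nat.card {q : CoprimePerm m (Fin n) × Fin n // minimalPeriod q.1.1 q.2 = d}
      = Nat.card (Σ π : CoprimePerm m (Fin n), {x // minimalPeriod π.1 x = d}) :=
        Nat.card_congr <| subtypeProdEquivSigmaSubtype
          fun (π : CoprimePerm m (Fin n)) x => minimalPeriod π.1 x = d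
    _ = Nat.card (Σ π : CoprimePerm m (Fin n),
          {e : ZMod d ↪ Fin n // Semiconj e (Equiv.addLeft (1 : ZMod d)) π.1}) :=
        Nat.card_congr <| .symm <| sigmaCongrRight fun π => periodicEmbeddingEquiv π.1 d
    _ = Nat.card (Σ e : ZMod d ↪ Fin n,
          {π : CoprimePerm m (Fin n) // Semiconj e (Equiv.addLeft (1 : ZMod d)) π.1}) :=
        Nat.card_congr ⟨fun ⟨π, e, h⟩ => ⟨e, π, h⟩, fun ⟨e, π, h⟩ => ⟨π, e, h⟩,
          fun _ => rfl, fun _ => rfl⟩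
    _ = n.descFactorial d * if d.Coprime m then Nat.card (CoprimePerm m (Fin (n - d))) else 0 := by
        simp only [Nat.card_sigma, card_coprimePerm_semiconj_fin, sum_const, card_univ, smul_eq_mul,
          Fintype.card_embedding_eq, ZMod.card, Fintype.card_fin]

theorem mul_card_coprimePerm (n m : ℕ) :
    n * Nat.card (CoprimePerm m (Fin n)) =
      ∑ d ∈ Icc 1 n with d.Coprime m,
        n.descFactorial d * Nat.card (CoprimePerm m (Fin (n - d))) := by
  have hperiod (q : CoprimePerm m (Fin n) × Fin n) : minimalPeriod q.1.1 q.2 ∈ Icc 1 n :=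
    mem_Icc.2 ⟨minimalPeriod_pos_of_mem_periodicPts (q.1.1.injective.mem_periodicPts q.2),
      minimalPeriod_le_card.trans_eq (Fintype.card_fin n)⟩
  calc n * Nat.card (CoprimePerm m (Fin n))
      = #(univ : Finset (CoprimePerm m (Fin n) × Fin n)) := by
        simp [mul_comm]
    _ = ∑ d ∈ Icc 1 n,
          Nat.card {q : CoprimePerm m (Fin n) × Fin n // minimalPeriod q.1.1 q.2 = d} := by
        rw [card_eq_sum_card_fiberwise fun q _ => hperiod q]
        simp only [Nat.card_eq_fintype_card, Fintype.card_subtype]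
    _ = ∑ d ∈ Icc 1 n with d.Coprime m,
          n.descFactorial d * Nat.card (CoprimePerm m (Fin (n - d))) := by
        rw [sum_filter]
        refine sum_congr rfl fun d hd => ?_
        have : NeZero d := ⟨Nat.one_le_iff_ne_zero.1 (mem_Icc.1 hd).1⟩
        rw [card_coprimePerm_minimalPeriod, mul_ite, mul_zero]

end Permutations

section DelayRecurrence

variable {m : ℕ} {S : Finset ℕ}

theorem mul_rpow_sub_one_le {x y δ : ℝ} (hx : 0 < x) (hy : 0 < y) (hδ₀ : 0 ≤ δ) (hδ₁ : δ ≤ 1) :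
    x * x ^ (δ - 1) ≤ (δ * x + (1 - δ) * y) * y ^ (δ - 1) :=
  calc x * x ^ (δ - 1) = x ^ δ * (y ^ (1 - δ) * y ^ (δ - 1)) := by
        rw [← Real.rpow_add hy, sub_add_sub_cancel, sub_self, Real.rpow_zero, mul_one,
          Real.rpow_sub_one hx.ne', mul_div_cancel₀ _ hx.ne']
    _ = x ^ δ * y ^ (1 - δ) * y ^ (δ - 1) := (mul_assoc ..).symm
    _ ≤ (δ * x + (1 - δ) * y) * y ^ (δ - 1) := by
        gcongr
        exact Real.geom_mean_le_arith_mean2_weighted hδ₀ (sub_nonneg.2 hδ₁) hx.le hy.le (by ring)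

/-- The right-hand side of the recurrence `n u(n) = (n - m) u(n - m) + ∑_{d ∈ S} u(n - d)`. The
indices are truncated differences; it is meant for `m ≤ n` and `S ⊆ [1, m]`. -/
noncomputable def delaySum (m : ℕ) (S : Finset ℕ) (u : ℕ → ℝ) (n : ℕ) : ℝ :=
  ((n : ℝ) - m) * u (n - m) + ∑ d ∈ S, u (n - d)

theorem delaySum_const_mul (m : ℕ) (S : Finset ℕ) (c : ℝ) (u : ℕ → ℝ) (n : ℕ) :
    delaySum m S (fun j => c * u j) n = c * delaySum m S u n := by
  simp only [delaySum, ← mul_sum]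
  ring

theorem delaySum_le_delaySum (hm : 0 < m) (hS : S ⊆ Icc 1 m) {u w : ℕ → ℝ} {n : ℕ}
    (hmn : m ≤ n) (h : ∀ j, n ≤ j + m → j < n → u j ≤ w j) :
    delaySum m S u n ≤ delaySum m S w n := by
  have hnm : (0 : ℝ) ≤ n - m := sub_nonneg.2 (mod_cast hmn)
  refine add_le_add (mul_le_mul_of_nonneg_left (h _ (by omega) (by omega)) hnm)
    (sum_le_sum fun d hd => ?_)
  have := mem_Icc.1 (hS hd)
  exact h _ (by omega) (by omega)

theorem le_of_delaySum_le (hm : 0 < m) (hS : S ⊆ Icc 1 m) {u w : ℕ → ℝ} {N : ℕ}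
    (hu : ∀ n, N + m ≤ n → n * u n ≤ delaySum m S u n)
    (hw : ∀ n, N + m ≤ n → delaySum m S w n ≤ n * w n)
    (base : ∀ n, N ≤ n → n < N + m → u n ≤ w n) (n : ℕ) (hn : N ≤ n) : u n ≤ w n := by
  induction n using Nat.strong_induction_on with
  | _ n ih =>
    obtain hlt | hle := lt_or_ge n (N + m)
    · exact base n hn hlt
    have hn₀ : (0 : ℝ) < n := by norm_cast; omega
    refine le_of_mul_le_mul_left ?_ hn₀
    calc n * u n ≤ delaySum m S u n := hu n hle
      _ ≤ delaySum m S w n :=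
        delaySum_le_delaySum hm hS (by omega) fun j hj hjn => ih j hjn (by omega)
      _ ≤ n * w n := hw n hle

theorem add_sub_div_eq_ite {k r d : ℕ} (hr : r < m) (hd : d ∈ Icc 1 m) :
    (m * (k + 1) + r - d) / m = if d ≤ r then k + 1 else k := by
  obtain ⟨h₁, h₂⟩ := mem_Icc.1 hd
  rw [Nat.div_eq_iff (by omega)]
  split_ifs <;> constructor <;> grind

theorem delaySum_div (hS : S ⊆ Icc 1 m) (V : ℕ → ℝ) (k : ℕ) {r : ℕ} (hr : r < m) :
    delaySum m S (fun n => V (n / m)) (m * (k + 1) + r) =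
      (m * k + r + #{d ∈ S | ¬d ≤ r}) * V k + #{d ∈ S | d ≤ r} * V (k + 1) := by
  have hquot : (m * (k + 1) + r - m) / m = k := by
    rw [show m * (k + 1) + r - m = r + m * k by grind, Nat.add_mul_div_left _ _ (by omega),
      Nat.div_eq_of_lt hr, zero_add]
  have hsum : ∑ d ∈ S, V ((m * (k + 1) + r - d) / m) =
      #{d ∈ S | d ≤ r} * V (k + 1) + #{d ∈ S | ¬d ≤ r} * V k := by
    rw [sum_congr rfl fun d hd => by rw [add_sub_div_eq_ite hr (hS hd), apply_ite V], sum_ite]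
    simp only [sum_const, nsmul_eq_mul]
  rw [delaySum, hquot, hsum]
  push_cast
  ring

theorem card_filter_le_le (hS : S ⊆ Icc 1 m) (r : ℕ) : #{d ∈ S | d ≤ r} ≤ r := by
  calc _ ≤ #(Icc 1 r) := card_le_card fun d hd => by
        have := mem_filter.1 hd
        exact mem_Icc.2 ⟨(mem_Icc.1 (hS this.1)).1, this.2⟩
    _ = r := by simp

theorem add_card_filter_not_le_le (hS : S ⊆ Icc 1 m) {r : ℕ} (hr : r ≤ m) :
    r + #{d ∈ S | ¬d ≤ r} ≤ m := by
  have : #{d ∈ S | ¬d ≤ r} ≤ #(Ioc r m) := card_le_card fun d hd => by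
        have := mem_filter.1 hd
        exact mem_Ioc.2 ⟨not_le.1 this.2, (mem_Icc.1 (hS this.1)).2⟩
  rw [Nat.card_Ioc] at this
  omega

theorem delaySum_div_le (hS : S ⊆ Icc 1 m) {V : ℕ → ℝ} {k r : ℕ} (hr : r < m)
    (hanti : V (k + 1) ≤ V k) (hV : (k + 1) * V k ≤ (k + 2 - #S / m) * V (k + 1)) :
    delaySum m S (fun n => V (n / m)) (m * (k + 1) + r) ≤ (m * (k + 1) + r) * V (k + 1) := by
  have hδ : (m : ℝ) * (#S / m) = #S := mul_div_cancel₀ _ (by norm_cast; omega)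
  have hβ : (r : ℝ) + #{d ∈ S | ¬d ≤ r} ≤ m := mod_cast add_card_filter_not_le_le hS hr.le
  have hcard : (#{d ∈ S | d ≤ r} : ℝ) + #{d ∈ S | ¬d ≤ r} = #S :=
    mod_cast card_filter_add_card_filter_not _
  rw [delaySum_div hS V k hr]
  linear_combination (m : ℝ) * hV + mul_le_mul_of_nonneg_right hβ (sub_nonneg.2 hanti) +
    (hcard - hδ) * V (k + 1)

theorem le_delaySum_div (hS : S ⊆ Icc 1 m) {V : ℕ → ℝ} {k r : ℕ} (hr : r < m)
    (hanti : V (k + 1) ≤ V k) (hV : (k + 1) * V (k + 1) ≤ (k + #S / m) * V k) :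
    (m * (k + 1) + r) * V (k + 1) ≤ delaySum m S (fun n => V (n / m)) (m * (k + 1) + r) := by
  have hδ : (m : ℝ) * (#S / m) = #S := mul_div_cancel₀ _ (by norm_cast; omega)
  have hα : (#{d ∈ S | d ≤ r} : ℝ) ≤ r := mod_cast card_filter_le_le hS r
  have hcard : (#{d ∈ S | d ≤ r} : ℝ) + #{d ∈ S | ¬d ≤ r} = #S :=
    mod_cast card_filter_add_card_filter_not _
  rw [delaySum_div hS V k hr]
  linear_combination (m : ℝ) * hV + mul_le_mul_of_nonneg_right hα (sub_nonneg.2 hanti) +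
    (hδ - hcard) * V k

theorem card_div_le_one (hS : S ⊆ Icc 1 m) : (#S / m : ℝ) ≤ 1 :=
  div_le_one_of_le₀ (mod_cast by simpa using card_le_card hS) m.cast_nonneg

theorem exists_eq_mul_succ_add (hm : 0 < m) {n : ℕ} (hn : m ≤ n) :
    ∃ k r, r < m ∧ n = m * (k + 1) + r :=
  ⟨n / m - 1, n % m, n.mod_lt hm, by
    rw [Nat.sub_add_cancel (Nat.div_pos hn hm), Nat.div_add_mod]⟩

theorem delaySum_add_one_rpow_le (hm : 0 < m) (hS : S ⊆ Icc 1 m) {n : ℕ} (hn : m ≤ n) :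
    delaySum m S (fun j => ((j / m : ℕ) + 1 : ℝ) ^ ((#S : ℝ) / m - 1)) n ≤
      n * ((n / m : ℕ) + 1 : ℝ) ^ ((#S : ℝ) / m - 1) := by
  have hδ : (#S / m : ℝ) - 1 ≤ 0 := sub_nonpos.2 (card_div_le_one hS)
  obtain ⟨k, r, hr, rfl⟩ := exists_eq_mul_succ_add hm hn
  have hamgm := mul_rpow_sub_one_le (x := k + 1) (y := k + 1 + 1) (by positivity) (by positivity)
    (δ := #S / m) (by positivity) (card_div_le_one hS)
  rw [Nat.mul_add_div hm, Nat.div_eq_of_lt hr, add_zero]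
  push_cast
  refine (delaySum_div_le (V := fun k => ((k : ℝ) + 1) ^ ((#S : ℝ) / m - 1)) hS hr ?_ ?_).trans_eq
    (by push_cast; rfl)
  · exact Real.rpow_le_rpow_of_nonpos (by positivity) (by simp) hδ
  · push_cast
    linear_combination hamgm

theorem le_delaySum_rpow (hm : 0 < m) (hS : S ⊆ Icc 1 m) {n : ℕ} (hn : 2 * m ≤ n) :
    n * ((n / m : ℕ) : ℝ) ^ ((#S : ℝ) / m - 1) ≤
      delaySum m S (fun j => ((j / m : ℕ) : ℝ) ^ ((#S : ℝ) / m - 1)) n := by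
  have hδ : (#S / m : ℝ) - 1 ≤ 0 := sub_nonpos.2 (card_div_le_one hS)
  obtain ⟨k, r, hr, rfl⟩ := exists_eq_mul_succ_add hm (by omega : m ≤ n)
  have hk : 0 < k := Nat.pos_of_ne_zero (by rintro rfl; omega)
  have hamgm := mul_rpow_sub_one_le (x := k + 1) (y := k) (by positivity) (by positivity)
    (δ := #S / m) (by positivity) (card_div_le_one hS)
  rw [Nat.mul_add_div hm, Nat.div_eq_of_lt hr, add_zero]
  push_cast
  refine Eq.trans_le (by push_cast; rfl)
    (le_delaySum_div (V := fun k => (k : ℝ) ^ ((#S : ℝ) / m - 1)) hS hr ?_ ?_)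
  · exact Real.rpow_le_rpow_of_nonpos (by positivity) (by simp) hδ
  · push_cast
    linear_combination hamgm

theorem le_rpow_of_le_delaySum (hm : 0 < m) (hS : S ⊆ Icc 1 m) {u : ℕ → ℝ}
    (hu : ∀ n, m ≤ n → n * u n ≤ delaySum m S u n) (hu₁ : ∀ n < m, u n ≤ 1) {n : ℕ} (hn : m ≤ n) :
    u n ≤ ((n : ℝ) / m) ^ ((#S : ℝ) / m - 1) := by
  have hfloor : (n : ℝ) / m ≤ (n / m : ℕ) + 1 := by
    rw [← Nat.floor_div_eq_div (K := ℝ)]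
    exact (Nat.lt_floor_add_one _).le
  have hn₀ : (0 : ℝ) < n := by norm_cast; omega
  calc u n ≤ ((n / m : ℕ) + 1 : ℝ) ^ ((#S : ℝ) / m - 1) := by
        refine le_of_delaySum_le (N := 0) hm hS (by simpa using hu)
          (fun j hj => delaySum_add_one_rpow_le hm hS (by omega)) (fun j _ hj => ?_) n n.zero_le
        have hjm : j < m := by omega
        simpa [Nat.div_eq_of_lt hjm] using hu₁ j hjm
    _ ≤ ((n : ℝ) / m) ^ ((#S : ℝ) / m - 1) :=
        Real.rpow_le_rpow_of_nonpos (by positivity) hfloor (sub_nonpos.2 (card_div_le_one hS))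

theorem mul_rpow_le_of_delaySum_le (hm : 0 < m) (hS : S ⊆ Icc 1 m) {u : ℕ → ℝ} {c : ℝ}
    (hc : 0 ≤ c) (hu : ∀ n, 2 * m ≤ n → delaySum m S u n ≤ n * u n)
    (hcu : ∀ n, m ≤ n → n < 2 * m → c ≤ u n) {n : ℕ} (hn : m ≤ n) :
    c * ((n : ℝ) / m) ^ ((#S : ℝ) / m - 1) ≤ u n := by
  have hfloor : (0 : ℝ) < (n / m : ℕ) := mod_cast Nat.div_pos hn hm
  have hsub (j : ℕ) (hj : m + m ≤ j) :
      j * (c * ((j / m : ℕ) : ℝ) ^ ((#S : ℝ) / m - 1)) ≤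
        delaySum m S (fun i => c * ((i / m : ℕ) : ℝ) ^ ((#S : ℝ) / m - 1)) j := by
    rw [delaySum_const_mul, mul_left_comm]
    exact mul_le_mul_of_nonneg_left (le_delaySum_rpow hm hS (by omega)) hc
  calc c * ((n : ℝ) / m) ^ ((#S : ℝ) / m - 1)
      ≤ c * ((n / m : ℕ) : ℝ) ^ ((#S : ℝ) / m - 1) :=
        mul_le_mul_of_nonneg_left (Real.rpow_le_rpow_of_nonpos hfloor Nat.cast_div_le
          (sub_nonpos.2 (card_div_le_one hS))) hc
    _ ≤ u n := by
        refine le_of_delaySum_le (N := m) hm hS hsub (fun j hj => hu j (by omega))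
          (fun j hmj hj => ?_) n hn
        have : j / m = 1 := (Nat.div_eq_iff hm).2 (by omega)
        simpa [this] using hcu j hmj (by omega)

end DelayRecurrence

theorem rho_eq_card_div (n m : ℕ) :
    rho n m = Nat.card (CoprimePerm m (Fin n)) / (n.factorial : ℝ) := by
  rw [rho, Nat.card_eq_fintype_card, Fintype.card_subtype]

theorem rho_le_one (n m : ℕ) : rho n m ≤ 1 := by
  rw [rho_eq_card_div]
  refine div_le_one_of_le₀ ?_ n.factorial.cast_nonneg
  exact_mod_cast (Finite.card_subtype_le _).trans_eq (by rw [Nat.card_perm, Nat.card_fin])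

theorem inv_factorial_le_rho (n m : ℕ) : (n.factorial : ℝ)⁻¹ ≤ rho n m := by
  have : Nonempty (CoprimePerm m (Fin n)) := ⟨1, by simp⟩
  rw [rho_eq_card_div, inv_eq_one_div]
  gcongr
  exact_mod_cast Nat.card_pos

theorem mul_rho (n m : ℕ) : n * rho n m = ∑ d ∈ Icc 1 n with d.Coprime m, rho (n - d) m := by
  rw [rho_eq_card_div, mul_div_assoc', ← Nat.cast_mul, mul_card_coprimePerm, Nat.cast_sum, sum_div]
  refine sum_congr rfl fun d hd => ?_
  have hdn : d ≤ n := (mem_Icc.1 (mem_filter.1 hd).1).2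
  have hdesc : (n.descFactorial d : ℝ) ≠ 0 := mod_cast (Nat.descFactorial_pos.2 hdn).ne'
  rw [rho_eq_card_div, ← Nat.factorial_mul_descFactorial hdn, mul_comm (Nat.factorial _)]
  push_cast
  exact mul_div_mul_left _ _ hdesc

theorem card_filter_coprime_Icc (m : ℕ) : #{d ∈ Icc 1 m | d.Coprime m} = m.totient := by
  rw [← Nat.filter_coprime_Ico_eq_totient m 1, add_comm 1 m, Ico_add_one_right_eq_Icc]
  simp only [Nat.coprime_comm]

theorem mul_rho_eq_delaySum {n m : ℕ} (h : m ≤ n) :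
    n * rho n m = delaySum m {d ∈ Icc 1 m | d.Coprime m} (rho · m) n := by
  obtain ⟨k, rfl⟩ := Nat.exists_eq_add_of_le h
  let f (d : ℕ) : ℝ := if d.Coprime m then rho (m + k - d) m else 0
  have hshort : ∑ d ∈ Ico 1 (m + 1), f d = ∑ d ∈ Icc 1 m with d.Coprime m, rho (m + k - d) m := by
    rw [sum_filter, Ico_add_one_right_eq_Icc]
  have hlong : ∑ d ∈ Ico (m + 1) (m + k + 1), f d = k * rho k m := by
    rw [show m + 1 = 1 + m by omega, show m + k + 1 = k + 1 + m by omega, ← sum_Ico_add' f,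
      mul_rho, sum_filter, Ico_add_one_right_eq_Icc]
    refine sum_congr rfl fun d _ => ?_
    simp only [f, Nat.coprime_add_self_left, show m + k - (d + m) = k - d by omega]
  calc ((m + k : ℕ) : ℝ) * rho (m + k) m
      = ∑ d ∈ Ico 1 (m + k + 1), f d := by
        rw [mul_rho, sum_filter, Ico_add_one_right_eq_Icc]
    _ = k * rho k m + ∑ d ∈ Icc 1 m with d.Coprime m, rho (m + k - d) m := by
        rw [← sum_Ico_consecutive f (by omega : 1 ≤ m + 1) (by omega), hshort, hlong, add_comm]
    _ = delaySum m {d ∈ Icc 1 m | d.Coprime m} (rho · m) (m + k) := by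
        rw [delaySum, Nat.add_sub_cancel_left, Nat.cast_add, add_sub_cancel_left]

theorem stmt_0_general (m : ℕ) (hm : 0 < m) :
    ∃ C : ℝ, 0 < C ∧ ∀ n : ℕ, m ≤ n →
      C * ((n : ℝ) / m) ^ ((Nat.totient m : ℝ) / m - 1) ≤ rho n m ∧
      rho n m ≤ ((n : ℝ) / m) ^ ((Nat.totient m : ℝ) / m - 1) := by
  have hS : {d ∈ Icc 1 m | d.Coprime m} ⊆ Icc 1 m := filter_subset _ _
  refine ⟨((2 * m).factorial : ℝ)⁻¹, by positivity, fun n hn => ?_⟩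
  rw [← card_filter_coprime_Icc]
  constructor
  · refine mul_rpow_le_of_delaySum_le hm hS (u := (rho · m)) (by positivity)
      (fun j hj => (mul_rho_eq_delaySum (by omega)).ge) (fun j _ hj => ?_) hn
    calc ((2 * m).factorial : ℝ)⁻¹ ≤ (j.factorial : ℝ)⁻¹ := by gcongr
      _ ≤ rho j m := inv_factorial_le_rho j m
  · exact le_rpow_of_le_delaySum hm hS (u := (rho · m)) (fun j hj => (mul_rho_eq_delaySum hj).le)
      (fun j _ => rho_le_one j m) hn

theorem stmt_0 (m : ℕ) (hm : 0 < m) (hsf : Squarefree m) :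
    ∃ C : ℝ, 0 < C ∧ ∀ n : ℕ, m ≤ n →
      C * ((n : ℝ) / m) ^ ((Nat.totient m : ℝ) / m - 1) ≤ rho n m ∧
      rho n m ≤ ((n : ℝ) / m) ^ ((Nat.totient m : ℝ) / m - 1) :=
  stmt_0_general m hm
end

section
/- Let m be a positive square-free integer and let C(m) = min{ρ(k,m) : m ≤ k ≤ 2m−1}. Then for all integers n ≥ m, ρ(n,m) ≥ C(m)·⌊n/m⌋^(φ(m)/m − 1). -/
/-!
Let `A` be a set of positive integers that is a union of residue classes modulo `m`, and let `ρ n`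
be the proportion of permutations of `n` points all of whose cycle lengths lie in `A`. Weighting
each cycle type by the reciprocal of its centralizer order and removing one cycle gives
`n ρ(n) = ∑ ρ(n - j)` over `j ∈ A ∩ [1, n]`; subtracting the same identity for `n - m` leaves a
recurrence with only the terms `j ≤ m`. Concavity of `t ↦ t ^ b` for `0 ≤ b ≤ 1` shows that
`n ↦ ⌊n / m⌋ ^ (|A ∩ [1, m]| / m - 1)` satisfies the same recurrence with `≤`, so `ρ` stays above
any nonnegative multiple of it that it dominates on `[m, 2m)`. Permutations of order coprime to `m`
are the case in which `A` consists of the integers coprime to `m`.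
-/

open Finset Nat

section CentralizerOrder

/-- The order `∏ i, i ^ cᵢ * cᵢ!` of the centralizer of a permutation with exactly `cᵢ` cycles of
length `i` for each `i`, where `cᵢ` is the multiplicity of `i` in `M`. Fixed points are cycles of
length `1` here, unlike in `Equiv.Perm.cycleType`. -/
def centralizerOrder (M : Multiset ℕ) : ℕ :=
  M.prod * ∏ i ∈ M.toFinset, (M.count i)!

lemma centralizerOrder_cons (j : ℕ) (M : Multiset ℕ) :
    centralizerOrder (j ::ₘ M) = j * (M.count j + 1) * centralizerOrder M := by
  have factorials_insert :
      ∏ i ∈ insert j M.toFinset, (M.count i)! = ∏ i ∈ M.toFinset, (M.count i)! :=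
    prod_insert_of_eq_one_if_notMem fun h ↦ by
      rw [Multiset.count_eq_zero_of_notMem (by simpa using h), factorial_zero]
  have factorials_cons : ∏ i ∈ (j ::ₘ M).toFinset, ((j ::ₘ M).count i)! =
      (M.count j + 1) * ∏ i ∈ insert j M.toFinset, (M.count i)! := by
    rw [Multiset.toFinset_cons, ← mul_prod_erase _ _ (mem_insert_self j M.toFinset),
      ← mul_prod_erase _ (fun i ↦ (M.count i)!) (mem_insert_self j M.toFinset),
      Multiset.count_cons_self, factorial_succ, mul_assoc]
    congr 2
    exact prod_congr rfl fun i hi ↦ by rw [Multiset.count_cons_of_ne (ne_of_mem_erase hi)]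
  rw [centralizerOrder, factorials_cons, factorials_insert, Multiset.prod_cons, centralizerOrder]
  ring

lemma centralizerOrder_pos {M : Multiset ℕ} (hM : ∀ i ∈ M, 0 < i) : 0 < centralizerOrder M :=
  Nat.mul_pos (Multiset.prod_pos hM) (prod_pos fun _ _ ↦ factorial_pos _)

lemma centralizerOrder_add_replicate_one {M : Multiset ℕ} (hM : 1 ∉ M) (k : ℕ) :
    centralizerOrder (M + Multiset.replicate k 1) = k ! * centralizerOrder M := by
  induction k with
  | zero => simp
  | succ k ih =>
    rw [Multiset.replicate_succ, Multiset.add_cons, centralizerOrder_cons, ih, Multiset.count_add,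
      Multiset.count_eq_zero_of_notMem hM, Multiset.count_replicate_self, factorial_succ]
    ring

lemma sum_div_centralizerOrder {M : Multiset ℕ} (hM : ∀ i ∈ M, 0 < i) :
    (M.sum / centralizerOrder M : ℝ) =
      ∑ j ∈ M.toFinset, 1 / (centralizerOrder (M.erase j) : ℝ) := by
  rw [sum_multiset_count, Nat.cast_sum, sum_div]
  refine sum_congr rfl fun j hj ↦ ?_
  obtain ⟨N, rfl⟩ := Multiset.exists_cons_of_mem (Multiset.mem_toFinset.1 hj)
  have hj_pos : 0 < j := hM j (Multiset.mem_cons_self j N)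
  have hN_pos : 0 < centralizerOrder N :=
    centralizerOrder_pos fun i hi ↦ hM i (Multiset.mem_cons_of_mem hi)
  rw [Multiset.erase_cons_head, centralizerOrder_cons, Multiset.count_cons_self]
  push_cast [smul_eq_mul]
  field_simp

end CentralizerOrder

section CycleTypes

lemma mem_partition_restricted {n : ℕ} {p : ℕ → Prop} [DecidablePred p] {μ : n.Partition} :
    μ ∈ Nat.Partition.restricted n p ↔ ∀ i ∈ μ.parts, p i :=
  mem_filter_univ μ

lemma parts_eq_filter_two_le_add_replicate_one {n : ℕ} (μ : n.Partition) :
    μ.parts = μ.parts.filter (2 ≤ ·) +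
      Multiset.replicate (n - (μ.parts.filter (2 ≤ ·)).sum) 1 := by
  have ones : μ.parts.filter (¬ 2 ≤ ·) = Multiset.replicate (μ.parts.count 1) 1 := by
    rw [← Multiset.filter_eq']
    exact Multiset.filter_congr fun i hi ↦ by have := μ.parts_pos hi; lia
  have split := Multiset.filter_add_not (2 ≤ ·) μ.parts
  rw [ones] at split
  have split_sum := congrArg Multiset.sum split
  rw [Multiset.sum_add, Multiset.sum_replicate, smul_eq_mul, mul_one, μ.parts_sum] at split_sum
  rw [Nat.sub_eq_of_eq_add' split_sum.symm, split]

variable {α : Type*} [Fintype α] [DecidableEq α]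

lemma partition_eq_iff_cycleType_eq {σ : Equiv.Perm α} {μ : (Fintype.card α).Partition} :
    σ.partition = μ ↔ σ.cycleType = μ.parts.filter (2 ≤ ·) := by
  refine ⟨fun h ↦ by rw [← h, Equiv.Perm.filter_parts_partition_eq_cycleType], fun h ↦ ?_⟩
  rw [Nat.Partition.ext_iff, parts_eq_filter_two_le_add_replicate_one μ, Equiv.Perm.parts_partition,
    ← Equiv.Perm.sum_cycleType, h]

theorem card_partition_eq_mul_centralizerOrder (μ : (Fintype.card α).Partition) :
    #{σ : Equiv.Perm α | σ.partition = μ} * centralizerOrder μ.parts = (Fintype.card α)! := by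
  set N := μ.parts.filter (2 ≤ ·) with hN
  have sum_le : N.sum ≤ Fintype.card α := by
    have split_sum := congrArg Multiset.sum (parts_eq_filter_two_le_add_replicate_one μ)
    rw [Multiset.sum_add, μ.parts_sum, ← hN] at split_sum
    exact split_sum ▸ Nat.le_add_right _ _
  have hone : 1 ∉ N := by simp [hN]
  have card_class := Equiv.Perm.card_of_cycleType_mul_eq α N
  rw [if_pos ⟨sum_le, fun i hi ↦ Multiset.of_mem_filter hi⟩, mul_assoc (_ !)] at card_class
  rw [parts_eq_filter_two_le_add_replicate_one μ, ← hN, centralizerOrder_add_replicate_one hone]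
  simpa only [partition_eq_iff_cycleType_eq, ← hN, centralizerOrder] using card_class

theorem card_partition_restricted_div_factorial {n : ℕ} (hα : Fintype.card α = n)
    (p : ℕ → Prop) [DecidablePred p] :
    (#{σ : Equiv.Perm α | ∀ i ∈ σ.partition.parts, p i} / n ! : ℝ) =
      ∑ μ ∈ Nat.Partition.restricted n p, 1 / (centralizerOrder μ.parts : ℝ) := by
  subst hα
  have maps_to : Set.MapsTo Equiv.Perm.partition
      ({σ : Equiv.Perm α | ∀ i ∈ σ.partition.parts, p i} : Finset _)
      (Nat.Partition.restricted (Fintype.card α) p : Set (Fintype.card α).Partition) :=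
    fun _ hσ ↦ mem_partition_restricted.2 ((mem_filter_univ _).1 hσ)
  rw [card_eq_sum_card_fiberwise maps_to, Nat.cast_sum, sum_div]
  refine sum_congr rfl fun μ hμ ↦ ?_
  have fiber : {σ ∈ ({σ | ∀ i ∈ σ.partition.parts, p i} : Finset (Equiv.Perm α)) |
      σ.partition = μ} = ({σ | σ.partition = μ} : Finset (Equiv.Perm α)) := by
    ext σ
    simp only [mem_filter, mem_univ, true_and, and_iff_right_iff_imp]
    rintro rfl
    exact mem_partition_restricted.1 hμ
  have order_pos : (0 : ℝ) < centralizerOrder μ.parts :=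
    mod_cast centralizerOrder_pos fun _ ↦ μ.parts_pos
  rw [fiber, div_eq_div_iff (by positivity) order_pos.ne', one_mul]
  exact_mod_cast card_partition_eq_mul_centralizerOrder μ

end CycleTypes

section CycleProportion

variable (p : ℕ → Prop) [DecidablePred p]

/-- The proportion of permutations of `n` points all of whose cycle lengths, counting fixed points
as cycles of length `1`, satisfy `p`. -/
noncomputable def cycleProportion (n : ℕ) : ℝ :=
  #{σ : Equiv.Perm (Fin n) | ∀ i ∈ σ.partition.parts, p i} / n !

lemma cycleProportion_nonneg (n : ℕ) : 0 ≤ cycleProportion p n := by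
  unfold cycleProportion
  positivity

lemma cycleProportion_eq_sum_restricted (n : ℕ) :
    cycleProportion p n =
      ∑ μ ∈ Nat.Partition.restricted n p, 1 / (centralizerOrder μ.parts : ℝ) :=
  card_partition_restricted_div_factorial (Fintype.card_fin n) p

variable {p} in
lemma sum_restricted_erase_eq_cycleProportion {n j : ℕ} (hj : 1 ≤ j) (hjn : j ≤ n) (hp : p j) :
    ∑ μ ∈ Nat.Partition.restricted n p with j ∈ μ.parts,
      1 / (centralizerOrder (μ.parts.erase j) : ℝ) = cycleProportion p (n - j) := by
  rw [cycleProportion_eq_sum_restricted]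
  let e := Nat.Partition.partitionWithPartEquiv hj hjn
  refine sum_bij' (fun μ hμ ↦ e ⟨μ, (mem_filter.1 hμ).2⟩) (fun ν _ ↦ (e.symm ν).1) ?_ ?_ ?_ ?_ ?_
  · intro μ hμ
    have hμp := mem_partition_restricted.1 (mem_filter.1 hμ).1
    refine mem_partition_restricted.2 fun i hi ↦ hμp i ?_
    exact Multiset.mem_of_mem_erase (b := j) (by simpa [e] using hi)
  · intro ν hν
    have hνp := mem_partition_restricted.1 hν
    refine mem_filter.2 ⟨mem_partition_restricted.2 ?_, (e.symm ν).2⟩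
    simpa [e] using And.intro hp hνp
  · simp
  · simp
  · simp [e]

theorem mul_cycleProportion_eq_sum (n : ℕ) :
    n * cycleProportion p n = ∑ j ∈ Ico 1 (n + 1) with p j, cycleProportion p (n - j) := by
  have remove_cycle (μ : n.Partition) : n * (1 / (centralizerOrder μ.parts : ℝ)) =
      ∑ j ∈ μ.parts.toFinset, 1 / (centralizerOrder (μ.parts.erase j) : ℝ) := by
    rw [← sum_div_centralizerOrder fun _ ↦ μ.parts_pos, μ.parts_sum, mul_one_div]
  rw [cycleProportion_eq_sum_restricted, mul_sum, sum_congr rfl fun μ _ ↦ remove_cycle μ,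
    sum_comm' (t' := {j ∈ Ico 1 (n + 1) | p j})
      (s' := fun j ↦ {μ ∈ Nat.Partition.restricted n p | j ∈ μ.parts})]
  · refine sum_congr rfl fun j hj ↦ ?_
    obtain ⟨hj, hpj⟩ := mem_filter.1 hj
    obtain ⟨hj_pos, hjn⟩ := mem_Ico.1 hj
    exact sum_restricted_erase_eq_cycleProportion hj_pos (Nat.lt_succ_iff.1 hjn) hpj
  · intro μ j
    simp only [mem_partition_restricted, mem_filter, Multiset.mem_toFinset, mem_Ico,
      Nat.lt_succ_iff]
    exact ⟨fun ⟨hp, hj⟩ ↦ ⟨⟨hp, hj⟩, ⟨μ.parts_pos hj, μ.le_of_mem_parts hj⟩, hp j hj⟩,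
      fun ⟨h, _⟩ ↦ h⟩

variable {p} in
theorem mul_cycleProportion_eq_of_periodic {m n : ℕ} (hp : Function.Periodic p m) (hmn : m ≤ n) :
    n * cycleProportion p n = (n - m : ℕ) * cycleProportion p (n - m) +
      ∑ j ∈ Ico 1 (m + 1) with p j, cycleProportion p (n - j) := by
  obtain ⟨k, rfl⟩ := Nat.exists_eq_add_of_le' hmn
  rw [mul_cycleProportion_eq_sum, Nat.add_sub_cancel, mul_cycleProportion_eq_sum,
    add_comm (∑ _ ∈ _, _)]
  simp only [sum_filter]
  rw [← sum_Ico_consecutive _ (by lia : 1 ≤ m + 1) (by lia : m + 1 ≤ k + m + 1)]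
  congr 1
  rw [add_comm m 1, add_right_comm, ← sum_Ico_add']
  refine sum_congr rfl fun j _ ↦ ?_
  simp only [hp j, Nat.add_sub_add_right]

end CycleProportion

section Recurrence

variable {m n : ℕ} {J : Finset ℕ}

theorem le_of_recurrence_le {f g : ℕ → ℝ} (hm : 0 < m) (hJ : J ⊆ Ico 1 (m + 1))
    (hinit : ∀ n, m ≤ n → n < 2 * m → g n ≤ f n)
    (hg : ∀ n, 2 * m ≤ n → n * g n ≤ (n - m : ℕ) * g (n - m) + ∑ j ∈ J, g (n - j))
    (hf : ∀ n, 2 * m ≤ n → (n - m : ℕ) * f (n - m) + ∑ j ∈ J, f (n - j) ≤ n * f n)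
    (hn : m ≤ n) : g n ≤ f n := by
  induction n using Nat.strong_induction_on with
  | _ n ih =>
    rcases lt_or_ge n (2 * m) with hn_lt | hn_ge
    · exact hinit n hn hn_lt
    have step : (n : ℝ) * g n ≤ n * f n :=
      calc (n : ℝ) * g n
          ≤ (n - m : ℕ) * g (n - m) + ∑ j ∈ J, g (n - j) := hg n hn_ge
        _ ≤ (n - m : ℕ) * f (n - m) + ∑ j ∈ J, f (n - j) := by
          gcongr with j hj
          · exact ih (n - m) (by lia) (by lia)
          · have := mem_Ico.1 (hJ hj)
            exact ih (n - j) (by lia) (by lia)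
        _ ≤ n * f n := hf n hn_ge
    exact le_of_mul_le_mul_left step (by exact_mod_cast hm.trans_le hn)

lemma sub_div_eq_ite {j : ℕ} (hmn : m ≤ n) (hj : j ∈ Ico 1 (m + 1)) :
    (n - j) / m = if j ≤ n % m then n / m else n / m - 1 := by
  obtain ⟨hj_pos, hjm⟩ := mem_Ico.1 hj
  have hm : 0 < m := by lia
  have hdiv := Nat.div_add_mod n m
  have hmod := Nat.mod_lt n hm
  obtain ⟨q, hq⟩ : ∃ q, n / m = q + 1 := ⟨n / m - 1, by have := Nat.div_pos hmn hm; lia⟩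
  rw [hq, mul_add, mul_one] at hdiv
  rw [hq]
  split_ifs with hjr 
  · exact Nat.div_eq_of_lt_le (by lia) (by lia)
  · exact Nat.div_eq_of_lt_le (by lia) (by lia)

lemma card_mul_sub_le_sum_div {u : ℕ → ℝ} (hJ : J ⊆ Ico 1 (m + 1)) (hmn : m ≤ n)
    (hu : u (n / m) ≤ u (n / m - 1)) :
    #J * u (n / m - 1) - (n % m : ℕ) * (u (n / m - 1) - u (n / m)) ≤ ∑ j ∈ J, u ((n - j) / m) := by
  have card_le : #{j ∈ J | j ≤ n % m} ≤ n % m := by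
    have subset : {j ∈ J | j ≤ n % m} ⊆ Ico 1 (n % m + 1) := fun j hj ↦ by
      have := mem_Ico.1 (hJ (mem_filter.1 hj).1)
      have := (mem_filter.1 hj).2
      exact mem_Ico.2 (by lia)
    simpa using card_le_card subset
  have drop : ∑ j ∈ J, (u (n / m - 1) - u ((n - j) / m)) =
      #{j ∈ J | j ≤ n % m} * (u (n / m - 1) - u (n / m)) := by
    rw [← nsmul_eq_mul, ← sum_const, sum_filter]
    refine sum_congr rfl fun j hj ↦ ?_
    rw [sub_div_eq_ite hmn (hJ hj)]
    split_ifs <;> simp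
  have drop_le : (#{j ∈ J | j ≤ n % m} : ℝ) * (u (n / m - 1) - u (n / m)) ≤
      (n % m : ℕ) * (u (n / m - 1) - u (n / m)) :=
    mul_le_mul_of_nonneg_right (mod_cast card_le) (sub_nonneg.2 hu)
  rw [sum_sub_distrib, sum_const, nsmul_eq_mul] at drop
  linarith

lemma mul_rpow_le_add_mul_sub_one_rpow {x a : ℝ} (hx : 1 < x) (ha : -1 ≤ a) (ha' : a ≤ 0) :
    x * x ^ a ≤ (x + a) * (x - 1) ^ a := by
  have hx0 : 0 < x := by linarith
  have hx1 : 0 < x - 1 := by linarith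
  have bernoulli : (1 + -x⁻¹) ^ (-a) ≤ 1 + -a * -x⁻¹ :=
    rpow_one_add_le_one_add_mul_self (neg_le_neg (inv_le_one_of_one_le₀ hx.le))
      (by linarith) (by linarith)
  have ratio : (1 + -x⁻¹) ^ (-a) = x ^ a / (x - 1) ^ a := by
    rw [← Real.div_rpow hx0.le hx1.le, ← inv_div, Real.inv_rpow (by positivity),
      ← Real.rpow_neg (by positivity), sub_div, div_self hx0.ne', one_div, sub_eq_add_neg]
  rw [ratio, div_le_iff₀ (by positivity)] at bernoulli
  calc x * x ^ a ≤ x * ((1 + -a * -x⁻¹) * (x - 1) ^ a) := by gcongr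
    _ = (x + a) * (x - 1) ^ a := by field_simp

theorem mul_div_rpow_le_recurrence (hm : 0 < m) (hJ : J ⊆ Ico 1 (m + 1)) (hn : 2 * m ≤ n) :
    n * ((n / m : ℕ) : ℝ) ^ ((#J : ℝ) / m - 1) ≤
      (n - m : ℕ) * (((n - m) / m : ℕ) : ℝ) ^ ((#J : ℝ) / m - 1) +
        ∑ j ∈ J, (((n - j) / m : ℕ) : ℝ) ^ ((#J : ℝ) / m - 1) := by
  have hm' : (0 : ℝ) < m := mod_cast hm
  have hq : 2 ≤ n / m := (Nat.le_div_iff_mul_le hm).2 hn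
  have hq' : (1 : ℝ) < (n / m : ℕ) := mod_cast hq
  have pred_cast : ((n / m - 1 : ℕ) : ℝ) = (n / m : ℕ) - 1 := by
    rw [Nat.cast_sub (by lia), Nat.cast_one]
  have card_le : (#J : ℝ) ≤ m := mod_cast by simpa using card_le_card hJ
  set a : ℝ := (#J : ℝ) / m - 1 with ha
  have card_eq : (#J : ℝ) = m + m * a := by rw [ha]; field_simp; ring
  have ha_nonpos : a ≤ 0 := by rw [ha, sub_nonpos, div_le_one hm']; exact card_le
  have ha_ge : -1 ≤ a := by rw [ha]; linarith [div_nonneg (Nat.cast_nonneg' (α := ℝ) #J) hm'.le]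
  have antitone : ((n / m : ℕ) : ℝ) ^ a ≤ ((n / m - 1 : ℕ) : ℝ) ^ a := by
    rw [pred_cast]
    exact Real.rpow_le_rpow_of_nonpos (by linarith) (by linarith) ha_nonpos
  have sum_ge := card_mul_sub_le_sum_div (u := fun k ↦ (k : ℝ) ^ a) hJ (by lia : m ≤ n) antitone
  have power_le := mul_rpow_le_add_mul_sub_one_rpow hq' ha_ge ha_nonpos
  have n_eq : (n : ℝ) = m * (n / m : ℕ) + (n % m : ℕ) := mod_cast (Nat.div_add_mod n m).symm
  have sub_div : (n - m) / m = n / m - 1 := by simpa using Nat.sub_mul_div n m 1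
  rw [Nat.cast_sub (by lia), sub_div]
  simp only [pred_cast] at sum_ge ⊢
  rw [card_eq] at sum_ge
  -- Once `n` is written as `m * (n / m) + n % m`, the terms in `n % m` cancel.
  linear_combination sum_ge + (m : ℝ) * power_le +
    (((n / m : ℕ) : ℝ) ^ a - ((n / m : ℕ) - 1 : ℝ) ^ a) * n_eq

end Recurrence

theorem mul_div_rpow_le_cycleProportion {p : ℕ → Prop} [DecidablePred p] {m n : ℕ} {c : ℝ}
    (hm : 0 < m) (hp : Function.Periodic p m) (hc : 0 ≤ c)
    (hinit : ∀ k, m ≤ k → k < 2 * m → c ≤ cycleProportion p k) (hn : m ≤ n) :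
    c * ((n / m : ℕ) : ℝ) ^ ((m.count p : ℝ) / m - 1) ≤ cycleProportion p n := by
  have card_residues : #{j ∈ Ico 1 (m + 1) | p j} = m.count p := by
    rw [add_comm, Nat.filter_Ico_card_eq_of_periodic 1 m p hp]
  rw [← card_residues]
  refine le_of_recurrence_le hm (filter_subset p _)
    (g := fun n ↦ c * ((n / m : ℕ) : ℝ) ^ _) ?_ ?_ ?_ hn
  · intro k hmk hk
    have hdiv : k / m = 1 := Nat.div_eq_of_lt_le (by lia) (by lia)
    simpa [hdiv] using hinit k hmk hk
  · intro k hk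
    have h := mul_le_mul_of_nonneg_left
      (mul_div_rpow_le_recurrence hm (filter_subset p (Ico 1 (m + 1))) hk) hc
    rw [← mul_sum]
    linarith
  · exact fun k hk ↦ (mul_cycleProportion_eq_of_periodic hp (by lia)).ge

section CoprimeOrder

lemma coprime_multiset_lcm_right_iff {k : ℕ} {M : Multiset ℕ} :
    Coprime k M.lcm ↔ ∀ i ∈ M, Coprime k i :=
  ⟨fun h _ hi ↦ h.coprime_dvd_right (Multiset.dvd_lcm hi), fun h ↦
    (coprime_multiset_prod_right_iff.2 h).coprime_dvd_right
      (Multiset.lcm_dvd.2 fun _ ↦ Multiset.dvd_prod)⟩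

lemma coprime_orderOf_iff {α : Type*} [Fintype α] [DecidableEq α] {σ : Equiv.Perm α} {m : ℕ} :
    Coprime (orderOf σ) m ↔ ∀ i ∈ σ.partition.parts, Coprime m i := by
  rw [coprime_comm, ← Equiv.Perm.lcm_cycleType, coprime_multiset_lcm_right_iff,
    Equiv.Perm.parts_partition]
  simp only [Multiset.mem_add, or_imp, forall_and, iff_self_and]
  rintro - i hi
  rw [Multiset.eq_of_mem_replicate hi]
  exact coprime_one_right m

lemma rho_eq_cycleProportion (n m : ℕ) : rho n m = cycleProportion (Coprime m) n := by
  simp only [rho, cycleProportion, coprime_orderOf_iff]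

lemma count_coprime_eq_totient (m : ℕ) : m.count (Coprime m) = φ m :=
  count_eq_card_filter_range _ _

lemma floor_natCast_div_natCast (n m : ℕ) : ⌊(n : ℝ) / m⌋ = (n / m : ℕ) := by
  rw [Int.floor_div_natCast, Int.floor_natCast, Int.natCast_div]

end CoprimeOrder

theorem stmt_2_general (m : ℕ) (hm : 0 < m) (C : ℝ)
    (hC : IsLeast {x : ℝ | ∃ k : ℕ, m ≤ k ∧ k ≤ 2 * m - 1 ∧ x = rho k m} C) (n : ℕ) (hn : m ≤ n) :
    C * ((⌊(n : ℝ) / m⌋ : ℝ)) ^ ((Nat.totient m : ℝ) / m - 1) ≤ rho n m := by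
  have hC_nonneg : 0 ≤ C := by
    obtain ⟨k, -, -, rfl⟩ := hC.1
    exact rho_eq_cycleProportion k m ▸ cycleProportion_nonneg _ k
  rw [floor_natCast_div_natCast, Int.cast_natCast, ← count_coprime_eq_totient,
    rho_eq_cycleProportion]
  refine mul_div_rpow_le_cycleProportion hm (periodic_coprime m) hC_nonneg (fun k hmk hk ↦ ?_) hn
  exact rho_eq_cycleProportion k m ▸ hC.2 ⟨k, hmk, by lia, rfl⟩

theorem stmt_2 (m : ℕ) (hm : 0 < m) (hsf : Squarefree m) (C : ℝ)
    (hC : IsLeast {x : ℝ | ∃ k : ℕ, m ≤ k ∧ k ≤ 2 * m - 1 ∧ x = rho k m} C) :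
    ∀ n : ℕ, m ≤ n →
      C * ((⌊(n : ℝ) / m⌋ : ℝ)) ^ ((Nat.totient m : ℝ) / m - 1) ≤ rho n m :=
  stmt_2_general m hm C hC
end

section
/- Let p be a prime and let n be a positive integer. Then ρ(n,p) = ∏_{i=1}^{⌊n/p⌋} (1 − 1/(ip)). -/
/-! The average over `Sym(n)` of the product of the weights `w k` of the cycle lengths `k` is the
value `Z n` of the cycle index. Removing a part of size `i` from a partition gives
`n * Z n = ∑ i ∈ [1, n], w i * Z (n - i)`, which determines `Z`. For `w` the indicator of the
non-multiples of `d`, this recurrence is solved by `c n = ∏ i ∈ [1, n / d], (1 - 1 / (i * d))`: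
comparing `n * c n` for successive `n` gives `n * c n = ∑ j ≤ n, d ∤ j, c j`, and reversing the
order of summation does not change the right-hand side, since the reversal preserves both the sum
of `c` over all of `[0, n]` and its sum over the multiples of `d`. -/

open Equiv Finset
open scoped Nat

/-- The order of the centralizer of a permutation whose cycle lengths, with fixed points recorded
as parts equal to `1`, form the multiset `s`. -/
def centralizerCard (s : Multiset ℕ) : ℕ := s.prod * ∏ i ∈ s.toFinset, (s.count i)!

lemma centralizerCard_eq_of_subset {s : Multiset ℕ} {t : Finset ℕ} (h : s.toFinset ⊆ t) :
    centralizerCard s = s.prod * ∏ i ∈ t, (s.count i)! := by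
  rw [centralizerCard, prod_subset h]
  intro i _ hi
  rw [Multiset.count_eq_zero_of_notMem (mt Multiset.mem_toFinset.2 hi), Nat.factorial_zero]

lemma centralizerCard_cons (i : ℕ) (s : Multiset ℕ) :
    centralizerCard (i ::ₘ s) = i * (s.count i + 1) * centralizerCard s := by
  have hi : i ∈ insert i s.toFinset := mem_insert_self _ _
  have hrest : ∏ j ∈ (insert i s.toFinset).erase i, ((i ::ₘ s).count j)! =
      ∏ j ∈ (insert i s.toFinset).erase i, (s.count j)! :=
    prod_congr rfl fun j hj ↦ by rw [Multiset.count_cons_of_ne (ne_of_mem_erase hj)]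
  rw [centralizerCard_eq_of_subset (Multiset.toFinset_cons i s).subset,
    centralizerCard_eq_of_subset (subset_insert i s.toFinset), ← mul_prod_erase _ _ hi,
    ← mul_prod_erase _ _ hi, hrest, Multiset.prod_cons, Multiset.count_cons_self,
    Nat.factorial_succ]
  ring

lemma centralizerCard_add_replicate_one {s : Multiset ℕ} (hs : 1 ∉ s) (k : ℕ) :
    centralizerCard (s + Multiset.replicate k 1) = k ! * centralizerCard s := by
  induction k with
  | zero => simp
  | succ k ih =>
    rw [Multiset.replicate_succ, Multiset.add_cons, centralizerCard_cons, ih, Multiset.count_add,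
      Multiset.count_eq_zero_of_notMem hs, Multiset.count_replicate_self, Nat.factorial_succ]
    ring

lemma centralizerCard_parts_ne_zero {n : ℕ} (l : n.Partition) : centralizerCard l.parts ≠ 0 :=
  mul_ne_zero (Multiset.prod_ne_zero fun h ↦ (l.parts_pos h).ne rfl)
    (prod_ne_zero_iff.2 fun _ _ ↦ Nat.factorial_ne_zero _)

lemma parts_eq_filter_add_replicate {n : ℕ} (l : n.Partition) :
    l.parts = l.parts.filter (2 ≤ ·) +
      Multiset.replicate (n - (l.parts.filter (2 ≤ ·)).sum) 1 := by
  have hones : l.parts.filter (¬ 2 ≤ ·) = Multiset.replicate (l.parts.count 1) 1 := by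
    rw [← Multiset.filter_eq']
    refine Multiset.filter_congr fun i hi ↦ ?_
    have := l.parts_pos hi
    lia
  have hsplit := Multiset.filter_add_not (2 ≤ ·) l.parts
  rw [hones] at hsplit
  have hsum := congrArg Multiset.sum hsplit
  rw [Multiset.sum_add, Multiset.sum_replicate, smul_eq_mul, mul_one, l.parts_sum] at hsum
  rw [Nat.sub_eq_of_eq_add' hsum.symm, hsplit]

lemma sum_Icc_count_mul {n : ℕ} (l : n.Partition) : ∑ i ∈ Icc 1 n, l.parts.count i * i = n := by
  have hsubset : l.parts.toFinset ⊆ Icc 1 n := fun i hi ↦ by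
    rw [Multiset.mem_toFinset] at hi
    exact mem_Icc.2 ⟨l.parts_pos hi, l.le_of_mem_parts hi⟩
  conv_rhs => rw [← l.parts_sum, sum_multiset_count_of_subset _ _ hsubset]
  simp only [smul_eq_mul]

lemma prime_dvd_multiset_lcm {R : Type*} [CommMonoidWithZero R] [NormalizedGCDMonoid R] {p : R}
    (hp : Prime p) (s : Multiset R) : p ∣ s.lcm ↔ ∃ k ∈ s, p ∣ k := by
  induction s using Multiset.induction_on with
  | empty => simpa using fun h ↦ hp.not_isUnit (isUnit_of_dvd_one h)
  | cons a s ih =>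
    simp only [Multiset.lcm_cons, hp.dvd_lcm, ih, Multiset.mem_cons, exists_eq_or_imp]

lemma prod_map_ite_zero_one {ι M : Type*} [CommMonoidWithZero M] (P : ι → Prop) [DecidablePred P]
    (s : Multiset ι) :
    (s.map fun k ↦ if P k then (0 : M) else 1).prod = if ∀ k ∈ s, ¬ P k then 1 else 0 := by
  induction s using Multiset.induction_on with
  | empty => simp
  | cons a s ih => by_cases ha : P a <;> simp [ih, ha]

section Perm

variable {α : Type*} [Fintype α] [DecidableEq α]

lemma partition_eq_iff_cycleType_eq_s11 (π : Perm α) (l : (Fintype.card α).Partition) :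
    π.partition = l ↔ π.cycleType = l.parts.filter (2 ≤ ·) := by
  constructor
  · rintro rfl
    exact Perm.filter_parts_partition_eq_cycleType.symm
  · intro h
    ext1
    rw [Perm.parts_partition, ← Perm.sum_cycleType, h, ← parts_eq_filter_add_replicate]

lemma card_partition_eq_mul_centralizerCard (l : (Fintype.card α).Partition) :
    #{π : Perm α | π.partition = l} * centralizerCard l.parts = (Fintype.card α)! := by
  have hparts := parts_eq_filter_add_replicate l
  have htwo : ∀ i ∈ l.parts.filter (2 ≤ ·), 2 ≤ i := fun i hi ↦ (Multiset.mem_filter.1 hi).2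
  set m := l.parts.filter (2 ≤ ·) with hm
  have hsum : m.sum ≤ Fintype.card α := by
    have := congrArg Multiset.sum hparts
    rw [l.parts_sum, Multiset.sum_add] at this
    lia
  have hone : 1 ∉ m := fun h ↦ absurd (htwo 1 h) (by lia)
  have hcount := Perm.card_of_cycleType_mul_eq α m
  rw [if_pos ⟨hsum, htwo⟩] at hcount
  rw [hparts, centralizerCard_add_replicate_one hone, centralizerCard, ← mul_assoc _ m.prod,
    ← hcount]
  simp only [partition_eq_iff_cycleType_eq_s11, ← hm]

lemma coprime_orderOf_iff_forall_parts {p : ℕ} (hp : p.Prime) (π : Perm α) :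
    (orderOf π).Coprime p ↔ ∀ k ∈ π.partition.parts, ¬ p ∣ k := by
  have hfixed (k m : ℕ) (hk : k ∈ Multiset.replicate m 1) : ¬ p ∣ k := by
    rw [Multiset.eq_of_mem_replicate hk]
    exact hp.not_dvd_one
  rw [Nat.coprime_comm, hp.coprime_iff_not_dvd, ← Perm.lcm_cycleType,
    prime_dvd_multiset_lcm hp.prime, Perm.parts_partition]
  simp only [Multiset.mem_add, or_imp, forall_and, not_exists, not_and]
  exact (and_iff_left fun k ↦ hfixed k _).symm

end Perm

section CycleIndex

variable {K : Type*} [Field K]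

/-- The cycle index of the symmetric group on `n` letters, evaluated at the weights `w k` for the
cycle lengths `k`. It is written as a sum over the conjugacy classes, that is, over the partitions
of `n`. -/
def cycleIndex (w : ℕ → K) (n : ℕ) : K :=
  ∑ l : n.Partition, (l.parts.map w).prod / centralizerCard l.parts

lemma cycleIndex_zero (w : ℕ → K) : cycleIndex w 0 = 1 := by
  simp [cycleIndex, centralizerCard]

variable [CharZero K]

lemma sum_perm_div_factorial_eq_cycleIndex (α : Type*) [Fintype α] [DecidableEq α] (w : ℕ → K) :
    (∑ π : Perm α, (π.partition.parts.map w).prod) / (Fintype.card α)! =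
      cycleIndex w (Fintype.card α) := by
  rw [← sum_fiberwise univ Perm.partition, sum_div, cycleIndex]
  refine sum_congr rfl fun l _ ↦ ?_
  have hfiber : ∑ π : Perm α with π.partition = l, (π.partition.parts.map w).prod =
      #{π : Perm α | π.partition = l} * (l.parts.map w).prod := by
    rw [← nsmul_eq_mul]
    exact sum_eq_card_nsmul fun π hπ ↦ by rw [(mem_filter.1 hπ).2]
  have hz : (centralizerCard l.parts : K) ≠ 0 := mod_cast centralizerCard_parts_ne_zero l
  have hcard : (#{π : Perm α | π.partition = l} : K) * centralizerCard l.parts =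
      (Fintype.card α)! := mod_cast card_partition_eq_mul_centralizerCard l
  rw [hfiber, div_eq_div_iff (mod_cast Nat.factorial_ne_zero _) hz, ← hcard]
  ring

lemma sum_count_mul_eq_mul_cycleIndex_sub (w : ℕ → K) {n i : ℕ} (hi : 1 ≤ i) (hin : i ≤ n) :
    ∑ l : n.Partition,
        ((l.parts.count i * i : ℕ) : K) * ((l.parts.map w).prod / centralizerCard l.parts) =
      w i * cycleIndex w (n - i) := by
  have hsupport : ∀ l ∈ (univ : Finset n.Partition),
      ((l.parts.count i * i : ℕ) : K) * ((l.parts.map w).prod / centralizerCard l.parts) ≠ 0 →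
        i ∈ l.parts := by
    intro l _ hl
    contrapose! hl
    simp [Multiset.count_eq_zero_of_notMem hl]
  rw [← sum_filter_of_ne hsupport, ← sum_subtype_eq_sum_filter, cycleIndex, mul_sum, subtype_univ]
  refine Fintype.sum_equiv (Nat.Partition.partitionWithPartEquiv hi hin) _ _ fun l ↦ ?_
  rw [Nat.Partition.partitionWithPartEquiv_apply_parts]
  have hz : (centralizerCard (l.1.parts.erase i) : K) ≠ 0 := by
    rw [← Nat.Partition.partitionWithPartEquiv_apply_parts hi hin]
    exact Nat.cast_ne_zero.2 (centralizerCard_parts_ne_zero _)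
  have hi0 : (i : K) ≠ 0 := mod_cast (by lia : i ≠ 0)
  rw [← Multiset.cons_erase l.2, Multiset.erase_cons_head, centralizerCard_cons,
    Multiset.count_cons_self, Multiset.map_cons, Multiset.prod_cons]
  have hcount : ((l.1.parts.erase i).count i + 1 : K) ≠ 0 := Nat.cast_add_one_ne_zero _
  push_cast
  field_simp

theorem mul_cycleIndex (w : ℕ → K) (n : ℕ) :
    n * cycleIndex w n = ∑ i ∈ Icc 1 n, w i * cycleIndex w (n - i) := by
  calc
    n * cycleIndex w n
      = ∑ l : n.Partition, ∑ i ∈ Icc 1 n, ((l.parts.count i * i : ℕ) : K) *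
          ((l.parts.map w).prod / centralizerCard l.parts) := by
        simp only [← sum_mul, ← Nat.cast_sum, sum_Icc_count_mul, ← mul_sum, cycleIndex]
    _ = ∑ i ∈ Icc 1 n, w i * cycleIndex w (n - i) := by
        rw [sum_comm]
        refine sum_congr rfl fun i hi ↦ ?_
        rw [mem_Icc] at hi
        exact sum_count_mul_eq_mul_cycleIndex_sub w hi.1 hi.2

theorem cycleIndex_eq_of_recurrence {w c : ℕ → K} (hzero : c 0 = 1)
    (hrec : ∀ n : ℕ, n * c n = ∑ i ∈ Icc 1 n, w i * c (n - i)) (n : ℕ) :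
    cycleIndex w n = c n := by
  induction n using Nat.strong_induction_on with
  | _ n ih =>
    rcases eq_or_ne n 0 with rfl | hn
    · rw [cycleIndex_zero, hzero]
    refine mul_left_cancel₀ (Nat.cast_ne_zero.2 hn) ?_
    rw [mul_cycleIndex, hrec]
    refine sum_congr rfl fun i hi ↦ ?_
    rw [mem_Icc] at hi
    rw [ih (n - i) (by lia)]

end CycleIndex

lemma sum_range_dvd_div_sub {M : Type*} [AddCommMonoid M] {d : ℕ} (hd : 0 < d) (f : ℕ → M)
    (n : ℕ) :
    ∑ j ∈ range (n + 1) with d ∣ j, f ((n - j) / d) =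
      ∑ j ∈ range (n + 1) with d ∣ j, f (j / d) := by
  have hle : d * (n / d) ≤ n := Nat.mul_div_le n d
  have hmem : ∀ j ∈ {j ∈ range (n + 1) | d ∣ j},
      d * (n / d) - j ∈ {j ∈ range (n + 1) | d ∣ j} := by
    simp only [mem_filter, mem_range]
    exact fun j hj ↦ ⟨by lia, Nat.dvd_sub (dvd_mul_right d _) hj.2⟩
  have hinvol : ∀ j ∈ {j ∈ range (n + 1) | d ∣ j}, d * (n / d) - (d * (n / d) - j) = j := by
    simp only [mem_filter, mem_range]
    rintro _ ⟨hj, k, rfl⟩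
    have : k ≤ n / d := (Nat.le_div_iff_mul_le hd).2 (by lia)
    exact Nat.sub_sub_self (Nat.mul_le_mul_left d this)
  refine sum_nbij' (d * (n / d) - ·) (d * (n / d) - ·) hmem hmem hinvol hinvol fun j hj ↦ ?_
  obtain ⟨k, rfl⟩ := (mem_filter.1 hj).2
  rw [← Nat.mul_sub, Nat.mul_div_cancel_left _ hd, Nat.sub_mul_div]

section SieveProduct

variable (K : Type*) [Field K]

/-- The product `∏ i ∈ [1, k], (1 - 1 / (i * d))`: for `k = n / d`, the proportion of permutations
of `n` letters without a cycle of length divisible by `d`. -/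
def sieveProduct (d k : ℕ) : K := ∏ i ∈ Icc 1 k, (1 - 1 / ((i : K) * d))

lemma sieveProduct_zero (d : ℕ) : sieveProduct K d 0 = 1 := by
  simp [sieveProduct]

variable [CharZero K] {d : ℕ}

lemma mul_sieveProduct_succ (hd : 0 < d) (k : ℕ) :
    ((k + 1 : ℕ) * d : K) * sieveProduct K d (k + 1) =
      ((k + 1 : ℕ) * d - 1) * sieveProduct K d k := by
  have hk : ((k + 1 : ℕ) : K) ≠ 0 := mod_cast k.succ_ne_zero
  have hd' : (d : K) ≠ 0 := mod_cast hd.ne'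
  rw [sieveProduct, prod_Icc_succ_top (by lia), ← sieveProduct]
  field_simp

lemma mul_sieveProduct_div_eq_sum (hd : 0 < d) (n : ℕ) :
    n * sieveProduct K d (n / d) = ∑ j ∈ range (n + 1) with ¬ d ∣ j, sieveProduct K d (j / d) := by
  induction n with
  | zero => simp [sum_filter]
  | succ n ih =>
    rw [sum_filter, sum_range_succ, ← sum_filter, ← ih]
    by_cases hdvd : d ∣ n + 1
    · have hn : ((n + 1 : ℕ) : K) = (n / d + 1 : ℕ) * d := by
        rw [← Nat.cast_mul, ← Nat.succ_div_of_dvd hdvd, Nat.div_mul_cancel hdvd]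
      rw [if_neg (not_not.2 hdvd), Nat.succ_div_of_dvd hdvd, hn, mul_sieveProduct_succ K hd, ← hn]
      push_cast
      ring
    · rw [if_pos hdvd, Nat.succ_div_of_not_dvd hdvd]
      push_cast
      ring

theorem mul_sieveProduct_div (hd : 0 < d) (n : ℕ) :
    n * sieveProduct K d (n / d) =
      ∑ i ∈ Icc 1 n, (if d ∣ i then 0 else 1) * sieveProduct K d ((n - i) / d) := by
  have hall : ∑ j ∈ range (n + 1), sieveProduct K d ((n - j) / d) =
      ∑ j ∈ range (n + 1), sieveProduct K d (j / d) :=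
    sum_range_reflect (fun j ↦ sieveProduct K d (j / d)) (n + 1)
  have hmultiples := sum_range_dvd_div_sub hd (sieveProduct K d) n
  rw [← sum_filter_add_sum_filter_not _ (d ∣ ·), hmultiples,
    ← sum_filter_add_sum_filter_not (range (n + 1)) (d ∣ ·), add_right_inj] at hall
  rw [mul_sieveProduct_div_eq_sum K hd, ← hall, sum_filter, range_eq_Ico,
    sum_eq_sum_Ico_succ_bot n.succ_pos, if_neg (not_not.2 (dvd_zero d)), zero_add]
  refine sum_congr rfl fun i _ ↦ ?_
  split_ifs <;> simp

end SieveProduct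

theorem stmt_11_general (K : Type*) [Field K] [CharZero K] (α : Type*) [Fintype α] [DecidableEq α]
    {d : ℕ} (hd : 0 < d) :
    (#{π : Perm α | ∀ k ∈ π.partition.parts, ¬ d ∣ k} : K) / (Fintype.card α)! =
      ∏ i ∈ Icc 1 (Fintype.card α / d), (1 - 1 / ((i : K) * d)) := by
  set w : ℕ → K := fun k ↦ if d ∣ k then 0 else 1
  calc
    (#{π : Perm α | ∀ k ∈ π.partition.parts, ¬ d ∣ k} : K) / (Fintype.card α)!
      = (∑ π : Perm α, (π.partition.parts.map w).prod) / (Fintype.card α)! := by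
        simp only [w, prod_map_ite_zero_one, sum_boole]
    _ = cycleIndex w (Fintype.card α) := sum_perm_div_factorial_eq_cycleIndex α w
    _ = sieveProduct K d (Fintype.card α / d) :=
        cycleIndex_eq_of_recurrence (by rw [Nat.zero_div, sieveProduct_zero])
          (mul_sieveProduct_div K hd) _

theorem stmt_11 (p : ℕ) (hp : p.Prime) (n : ℕ) (hn : 0 < n) :
    rho n p = ∏ i ∈ Finset.Icc 1 (n / p), (1 - 1 / ((i : ℝ) * p)) := by
  simpa only [rho, coprime_orderOf_iff_forall_parts hp, Fintype.card_fin] using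
    stmt_11_general ℝ (Fin n) hp.pos
end
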